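/- Let η(ξ) be a C_0^∞ function on ℝⁿ, let ψ(x,ξ) ∈ Φ¹, and set K(x,z) = ∫_{ℝⁿ} η(ξ) e^{i(ψ(x,ξ) + ⟨z,ξ⟩)} dξ. Then for any α ∈ (0,1) there exists a constant c > 0 such that |K(x,z)| ≤ c (1+|z|)^{−n−α} for all x, z ∈ ℝⁿ. -/

import Mathlib

open MeasureTheory Real Complex
open scoped ENNReal NNReal RealInnerProductSpace SchwartzMap Classical

noncomputable section

/-- `ℝⁿ` as a Euclidean space. -/
abbrev En (n : ℕ) : Type := EuclideanSpace ℝ (Fin n)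

/-- Partial derivative in the `i`-th coordinate direction. -/
def pd {n : ℕ} {F : Type} [NormedAddCommGroup F] [NormedSpace ℝ F]
    (i : Fin n) (f : En n → F) : En n → F :=
  fun x => fderiv ℝ f x (EuclideanSpace.single i 1)

/-- Multi-index partial derivative `∂^α`. -/
def mderiv {n : ℕ} {F : Type} [NormedAddCommGroup F] [NormedSpace ℝ F]
    (α : Fin n → ℕ) (f : En n → F) : En n → F :=
  (List.finRange n).foldr (fun i g => (pd i)^[α i] g) f

/-- The order `|α|` of a multi-index. -/
def mdeg {n : ℕ} (α : Fin n → ℕ) : ℕ := ∑ i, α i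

/-- The finite set of multi-indices `α` with every entry `≤ k` and `|α| ≤ k`;
this enumerates all multi-indices of order at most `k`. -/
def multiIdx (n k : ℕ) : Finset (Fin n → ℕ) :=
  (Fintype.piFinset fun _ : Fin n => Finset.range (k + 1)).filter fun α => mdeg α ≤ k

/-- Japanese bracket `⟨ξ⟩^t = (1+|ξ|²)^{t/2}`. -/
def jb {n : ℕ} (ξ : En n) (t : ℝ) : ℝ := (1 + ‖ξ‖ ^ 2) ^ (t / 2)

/-- The rough amplitude class `L^p S^m_ρ`. -/
def LpSm {n : ℕ} (p : ℝ≥0∞) (m ρ : ℝ) (a : En n → En n → ℂ) : Prop :=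
  (∀ x, ContDiff ℝ (⊤ : ℕ∞) (a x)) ∧
  (∀ (α : Fin n → ℕ) (ξ : En n), AEStronglyMeasurable (fun x => mderiv α (a x) ξ) volume) ∧
  ∀ α : Fin n → ℕ, ∃ C : ℝ, ∀ ξ : En n,
    eLpNorm (fun x => mderiv α (a x) ξ) p volume ≤
      ENNReal.ofReal (C * jb ξ (m - ρ * (mdeg α : ℝ)))

/-- The seminorms `|a|_{p,m,s}` of an amplitude in `L^p S^m_ρ`. -/
def aSemi {n : ℕ} (p : ℝ≥0∞) (m ρ : ℝ) (s : ℕ) (a : En n → En n → ℂ) : ℝ≥0∞ :=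
  ∑ α ∈ multiIdx n s, ⨆ ξ : En n,
    ENNReal.ofReal (jb ξ (ρ * (mdeg α : ℝ) - m)) *
      eLpNorm (fun x => mderiv α (a x) ξ) p volume

/-- The mixed derivative `∂_ξ^α ∂_x^β φ(x,ξ)`. -/
def mixedD {n : ℕ} (α β : Fin n → ℕ) (φ : En n → En n → ℝ) (x ξ : En n) : ℝ :=
  mderiv α (fun ζ => mderiv β (fun y => φ y ζ) x) ξ

/-- The phase function class `Φ^k`. -/
def PhiClass {n : ℕ} (k : ℕ) (φ : En n → En n → ℝ) : Prop :=
  ContDiffOn ℝ (⊤ : ℕ∞) (fun q : En n × En n => φ q.1 q.2) {q | q.2 ≠ 0} ∧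
  (∀ (x ξ : En n) (t : ℝ), 0 < t → φ x (t • ξ) = t * φ x ξ) ∧
  ∀ α β : Fin n → ℕ, k ≤ mdeg α + mdeg β →
    ∃ C : ℝ, ∀ (x ξ : En n), ξ ≠ 0 →
      ‖ξ‖ ^ ((mdeg α : ℝ) - 1) * |mixedD α β φ x ξ| ≤ C

/-- The mixed Hessian matrix `[∂²φ/∂x_j∂ξ_k]`. -/
def mixHess {n : ℕ} (φ : En n → En n → ℝ) (x ξ : En n) : Matrix (Fin n) (Fin n) ℝ :=
  Matrix.of fun j k => pd j (fun y => pd k (φ y) ξ) x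

/-- The strong non-degeneracy (SND) condition. -/
def SNDcond {n : ℕ} (φ : En n → En n → ℝ) : Prop :=
  ∃ c : ℝ, 0 < c ∧ ∀ (x ξ : En n), ξ ≠ 0 → c ≤ |(mixHess φ x ξ).det|

/-- The Fourier transform `f̂(ξ) = ∫ e^{-i⟨y,ξ⟩} f(y) dy`. -/
def ft {n : ℕ} (f : En n → ℂ) (ξ : En n) : ℂ :=
  ∫ y : En n, Complex.exp (-(Complex.I * Complex.ofReal ⟪y, ξ⟫)) * f y

/-- The linear Fourier integral operator
`T_a f(x) = (2π)^{-n} ∫ e^{iφ(x,ξ)} a(x,ξ) f̂(ξ) dξ`. -/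
def fio {n : ℕ} (a : En n → En n → ℂ) (φ : En n → En n → ℝ) (f : En n → ℂ)
    (x : En n) : ℂ :=
  (((2 * Real.pi) ^ n)⁻¹ : ℝ) •
    ∫ ξ : En n, Complex.exp (Complex.I * Complex.ofReal (φ x ξ)) * a x ξ * ft f ξ

/-- The conjugate exponent `p′` of `p ∈ [1,∞]`. -/
def pconj (p : ℝ≥0∞) : ℝ≥0∞ := (1 - p⁻¹)⁻¹

/-- The order `𝔪(ρ,p,q)` from Definition 4.6. -/
def frakm (n : ℕ) (ρ : ℝ) (p q : ℝ≥0∞) : ℝ :=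
  if p < 2 ∨ (2 ≤ p ∧ q < pconj p) then
    (n : ℝ) * (ρ - 1) * (min p q)⁻¹.toReal -
      (((n : ℝ) - 1) / 2) * (p⁻¹.toReal + (min p q)⁻¹.toReal)
  else if 2 ≤ q then
    (n : ℝ) * (ρ - 1) / 2 - ((n : ℝ) - 1) * (1 / 2 - q⁻¹.toReal)
  else
    (n : ℝ) * (ρ - 1) * q⁻¹.toReal -
      (((n : ℝ) - 1) / (1 - 2 * p⁻¹.toReal)) * (q⁻¹.toReal - 1 / 2)

/-- The order `ℳ(ρ,p,q)` from Definition 4.6. -/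
def scrM (n : ℕ) (ρ : ℝ) (p q : ℝ≥0∞) : ℝ :=
  (n : ℝ) * (ρ - 1) * q⁻¹.toReal -
    (((n : ℝ) - 1) / (1 + p⁻¹.toReal)) * (q⁻¹.toReal - 1 / 2)

/-- The distribution function `λ_f(s) = |{x : |f(x)| > s}|`. -/
def distFn {n : ℕ} (f : En n → ℂ) (s : ℝ) : ℝ≥0∞ := volume {x : En n | s < ‖f x‖}

/-- The decreasing rearrangement `f*`. -/
def rearr {n : ℕ} (f : En n → ℂ) (t : ℝ) : ℝ :=
  sInf {s : ℝ | 0 ≤ s ∧ distFn f s ≤ ENNReal.ofReal t}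

/-- The Lorentz space quasinorm
`‖f‖_{L^{r,q}} = (∫_0^∞ (t^{1/r} f*(t))^q dt/t)^{1/q}`. -/
def lorentzNorm {n : ℕ} (r q : ℝ≥0∞) (f : En n → ℂ) : ℝ≥0∞ :=
  (∫⁻ t in Set.Ioi (0 : ℝ),
      ENNReal.ofReal ((t ^ r⁻¹.toReal * rearr f t) ^ q.toReal / t)) ^ q⁻¹.toReal

/-- Mixed frequency derivatives `∂_ξ^{α₁} ∂_η^{α₂} a(x,ξ,η)` of a bilinear amplitude. -/
def d2 {n : ℕ} (α₁ α₂ : Fin n → ℕ) (a : En n → En n → En n → ℂ)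
    (x ξ η : En n) : ℂ :=
  mderiv α₁ (fun ζ => mderiv α₂ (fun θ => a x ζ θ) η) ξ

/-- Mixed derivatives `∂_x^β ∂_ξ^{α₁} ∂_η^{α₂} a(x,ξ,η)` of a bilinear amplitude. -/
def d3 {n : ℕ} (β α₁ α₂ : Fin n → ℕ) (a : En n → En n → En n → ℂ)
    (x ξ η : En n) : ℂ :=
  mderiv β (fun y => d2 α₁ α₂ a y ξ η) x

/-- The bilinear product-type rough amplitude class `L^p_Π S^{(m₁,m₂)}_{(ρ₁,ρ₂)}(n,2)`. -/
def LpPiSm2 {n : ℕ} (p : ℝ≥0∞) (m₁ m₂ ρ₁ ρ₂ : ℝ) (a : En n → En n → En n → ℂ) : Prop :=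
  (∀ x, ContDiff ℝ (⊤ : ℕ∞) (fun q : En n × En n => a x q.1 q.2)) ∧
  (∀ (α₁ α₂ : Fin n → ℕ) (ξ η : En n),
    AEStronglyMeasurable (fun x => d2 α₁ α₂ a x ξ η) volume) ∧
  ∀ α₁ α₂ : Fin n → ℕ, ∃ C : ℝ, ∀ ξ η : En n,
    eLpNorm (fun x => d2 α₁ α₂ a x ξ η) p volume ≤
      ENNReal.ofReal (C * jb ξ (m₁ - ρ₁ * (mdeg α₁ : ℝ)) * jb η (m₂ - ρ₂ * (mdeg α₂ : ℝ)))

/-- The bilinear rough amplitude class `L^p S^m_ρ(n,2)`. -/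
def LpSm2 {n : ℕ} (p : ℝ≥0∞) (m ρ : ℝ) (a : En n → En n → En n → ℂ) : Prop :=
  (∀ x, ContDiff ℝ (⊤ : ℕ∞) (fun q : En n × En n => a x q.1 q.2)) ∧
  (∀ (α₁ α₂ : Fin n → ℕ) (ξ η : En n),
    AEStronglyMeasurable (fun x => d2 α₁ α₂ a x ξ η) volume) ∧
  ∀ α₁ α₂ : Fin n → ℕ, ∃ C : ℝ, ∀ ξ η : En n,
    eLpNorm (fun x => d2 α₁ α₂ a x ξ η) p volume ≤
      ENNReal.ofReal (C * (1 + ‖ξ‖ + ‖η‖) ^ (m - ρ * ((mdeg α₁ : ℝ) + (mdeg α₂ : ℝ))))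

/-- The bilinear Hörmander class `S^m_{ρ,δ}(n,2)`. -/
def HormS2 {n : ℕ} (m ρ δ : ℝ) (a : En n → En n → En n → ℂ) : Prop :=
  ContDiff ℝ (⊤ : ℕ∞) (fun q : En n × En n × En n => a q.1 q.2.1 q.2.2) ∧
  ∀ β α₁ α₂ : Fin n → ℕ, ∃ C : ℝ, ∀ x ξ η : En n,
    ‖d3 β α₁ α₂ a x ξ η‖ ≤
      C * (1 + ‖ξ‖ + ‖η‖) ^ (m - ρ * ((mdeg α₁ : ℝ) + (mdeg α₂ : ℝ)) + δ * (mdeg β : ℝ))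

/-- The bilinear Fourier integral operator
`T_a(f,g)(x) = ∫∫ a(x,ξ,η) e^{iφ₁(x,ξ)+iφ₂(x,η)} f̂(ξ) ĝ(η) dξ dη`. -/
def bfio {n : ℕ} (a : En n → En n → En n → ℂ) (φ₁ φ₂ : En n → En n → ℝ)
    (f g : En n → ℂ) (x : En n) : ℂ :=
  ∫ w : En n × En n,
    a x w.1 w.2 * Complex.exp (Complex.I * Complex.ofReal (φ₁ x w.1 + φ₂ x w.2)) *
      ft f w.1 * ft g w.2

/-- Partial derivative of a function of `N` frequency variables in the `i`-th coordinate
of the `j`-th variable. -/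
def pdN {n N : ℕ} (j : Fin N) (i : Fin n) (g : (Fin N → En n) → ℂ) :
    (Fin N → En n) → ℂ :=
  fun ξ => fderiv ℝ g ξ (Pi.single j (EuclideanSpace.single i 1))

/-- Multi-index derivative `∂_{ξ₁}^{A 1} ⋯ ∂_{ξ_N}^{A N}`. -/
def mderivN {n N : ℕ} (A : Fin N → Fin n → ℕ) (g : (Fin N → En n) → ℂ) :
    (Fin N → En n) → ℂ :=
  (List.finRange N).foldr
    (fun j h => (List.finRange n).foldr (fun i h' => (pdN j i)^[A j i] h') h) g

/-- The multilinear product-type rough amplitude class `L^p_Π S^{m⃗}_{ρ⃗}(n,N)`. -/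
def LpPiSmN {n N : ℕ} (p : ℝ≥0∞) (m ρ : Fin N → ℝ)
    (a : En n → (Fin N → En n) → ℂ) : Prop :=
  (∀ x, ContDiff ℝ (⊤ : ℕ∞) (a x)) ∧
  (∀ (A : Fin N → Fin n → ℕ) (ξ : Fin N → En n),
    AEStronglyMeasurable (fun x => mderivN A (a x) ξ) volume) ∧
  ∀ A : Fin N → Fin n → ℕ, ∃ C : ℝ, ∀ ξ : Fin N → En n,
    eLpNorm (fun x => mderivN A (a x) ξ) p volume ≤
      ENNReal.ofReal (C * ∏ j, jb (ξ j) (m j - ρ j * (mdeg (A j) : ℝ)))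

/-- The multilinear rough amplitude class `L^p S^m_ρ(n,N)`. -/
def LpSmN {n N : ℕ} (p : ℝ≥0∞) (m ρ : ℝ) (a : En n → (Fin N → En n) → ℂ) : Prop :=
  (∀ x, ContDiff ℝ (⊤ : ℕ∞) (a x)) ∧
  (∀ (A : Fin N → Fin n → ℕ) (ξ : Fin N → En n),
    AEStronglyMeasurable (fun x => mderivN A (a x) ξ) volume) ∧
  ∀ A : Fin N → Fin n → ℕ, ∃ C : ℝ, ∀ ξ : Fin N → En n,
    eLpNorm (fun x => mderivN A (a x) ξ) p volume ≤
      ENNReal.ofReal (C * (1 + ∑ j, ‖ξ j‖) ^ (m - ρ * ∑ j, (mdeg (A j) : ℝ)))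

/-- The multilinear Fourier integral operator. -/
def mfio {n N : ℕ} (a : En n → (Fin N → En n) → ℂ) (φ : Fin N → En n → En n → ℝ)
    (f : Fin N → En n → ℂ) (x : En n) : ℂ :=
  ∫ ξ : Fin N → En n,
    a x ξ * Complex.exp (Complex.I * Complex.ofReal (∑ j, φ j x (ξ j))) *
      ∏ j, ft (f j) (ξ j)

/-- The Sobolev (Bessel potential) norm `‖f‖_{H^{s,q}} = ‖ℱ^{-1}(⟨ξ⟩^s f̂)‖_{L^q}`. -/
def besselNorm {n : ℕ} (s : ℝ) (q : ℝ≥0∞) (f : En n → ℂ) : ℝ≥0∞ :=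
  eLpNorm (fun x : En n =>
    (((2 * Real.pi) ^ n)⁻¹ : ℝ) •
      ∫ ξ : En n, Complex.ofReal (jb ξ s) * ft f ξ *
        Complex.exp (Complex.I * Complex.ofReal ⟪x, ξ⟫)) q volume

/-!
Translating by `v = (π / ‖z‖ ^ 2) • z` changes the sign of `exp (i⟪z, ξ⟫)`, so replacing the
amplitude `a x ξ = η ξ * exp (i ψ x ξ)` by its `N`-th difference with step `v` multiplies the
integral by `(-2) ^ N`. Euler's identity turns the bound on `∂ξ ψ` into `|ψ x ξ| ≤ C ‖ξ‖`, and Faà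
di Bruno's formula then shows that `a x - η 0` is, like `ψ`, a symbol of order one near the origin,
uniformly in `x`. For `1 ≤ s ≤ N` its `N`-th differences are therefore
`O(‖v‖ ^ s * ‖ξ‖ ^ (1 - s))`. With `s = n + α` and `α < 1` this singularity is integrable, and the
kernel is `O(‖v‖ ^ s) = O(‖z‖ ^ (-s))` for `1 ≤ ‖z‖`.
-/

section FiniteDifferences

lemma norm_fwdDiff_iter_le {M G : Type*} [AddCommMonoid M] [SeminormedAddCommGroup G]
    {f : M → G} {h y : M} {B : ℝ} (N : ℕ) (hB : ∀ k ≤ N, ‖f (y + k • h)‖ ≤ B) :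
    ‖(fwdDiff h)^[N] f y‖ ≤ 2 ^ N * B := by
  induction N generalizing f B with
  | zero => simpa using hB 0 le_rfl
  | succ N ih =>
    have hΔ : ∀ k ≤ N, ‖fwdDiff h f (y + k • h)‖ ≤ 2 * B := fun k hk ↦ by
      have hsucc := hB (k + 1) (by lia)
      rw [succ_nsmul, ← add_assoc] at hsucc
      calc ‖fwdDiff h f (y + k • h)‖ ≤ ‖f (y + k • h + h)‖ + ‖f (y + k • h)‖ := norm_sub_le _ _
        _ ≤ 2 * B := by linarith [hB k (by lia)]
    calc ‖(fwdDiff h)^[N + 1] f y‖ ≤ 2 ^ N * (2 * B) := ih hΔ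
      _ = 2 ^ (N + 1) * B := by ring

lemma fwdDiff_iter_eq_zero_of_support_subset {E F : Type*} [SeminormedAddCommGroup E]
    [NormedAddCommGroup F] {f : E → F} {v x : E} {R : ℝ} {N : ℕ}
    (hf : Function.support f ⊆ Metric.closedBall 0 R) (hx : R + N * ‖v‖ < ‖x‖) :
    (fwdDiff v)^[N] f x = 0 := by
  have hzero : ∀ k ≤ N, ‖f (x + k • v)‖ ≤ 0 := fun k hk ↦ by
    by_contra! hne
    have hball : ‖x + k • v‖ ≤ R := mem_closedBall_zero_iff.1 (hf (norm_pos_iff.1 hne))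
    have hkv : ‖k • v‖ ≤ N * ‖v‖ := norm_nsmul_le.trans (by gcongr)
    linarith [norm_le_add_norm_add x (k • v)]
  simpa using norm_fwdDiff_iter_le N hzero

lemma fwdDiff_iter_succ_sub_const {M G : Type*} [AddCommMonoid M] [AddCommGroup G]
    (f : M → G) (c : G) (h : M) (N : ℕ) :
    (fwdDiff h)^[N + 1] (fun x ↦ f x - c) = (fwdDiff h)^[N + 1] f := by
  simp only [Function.iterate_succ_apply]
  congr 1
  ext x
  simp [fwdDiff]

lemma norm_fwdDiff_iter_le_of_norm_iteratedFDeriv_le {E F : Type*} [NormedAddCommGroup E]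
    [NormedSpace ℝ E] [NormedAddCommGroup F] [NormedSpace ℝ F] {f : E → F} {s : Set E}
    {x v : E} {N : ℕ} {C : ℝ} (hs : Convex ℝ s) (hf : ∀ y ∈ s, ContDiffAt ℝ N f y)
    (hC : ∀ y ∈ s, ‖iteratedFDeriv ℝ N f y‖ ≤ C) (hx : ∀ k ≤ N, x + k • v ∈ s) :
    ‖(fwdDiff v)^[N] f x‖ ≤ C * ‖v‖ ^ N := by
  induction N generalizing f s C with
  | zero => simpa using hC x (by simpa using hx 0 le_rfl)
  | succ N ih =>
    have hshift (y : E) (hy : y + v ∈ s) : ContDiffAt ℝ (N + 1 : ℕ) (fun z ↦ f (z + v)) y :=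
      (hf _ hy).comp y (contDiffAt_id.add contDiffAt_const)
    have hN : (N : WithTop ℕ∞) ≤ (N + 1 : ℕ) := by exact_mod_cast N.le_succ
    have hbound : ∀ y ∈ s ∩ (· + v) ⁻¹' s, ‖iteratedFDeriv ℝ N (fwdDiff v f) y‖ ≤ C * ‖v‖ := by
      rintro y ⟨hy, hyv⟩
      have hsub : iteratedFDeriv ℝ N (fwdDiff v f) y =
          iteratedFDeriv ℝ N f (y + v) - iteratedFDeriv ℝ N f y := by
        rw [← iteratedFDeriv_comp_add_right]
        exact iteratedFDeriv_sub_apply ((hshift y hyv).of_le hN) ((hf y hy).of_le hN)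
      calc ‖iteratedFDeriv ℝ N (fwdDiff v f) y‖ ≤ C * ‖y + v - y‖ := by
            rw [hsub]
            refine hs.norm_image_sub_le_of_norm_fderiv_le (𝕜 := ℝ) (fun z hz ↦ ?_)
              (fun z hz ↦ ?_) hy hyv
            · exact (hf z hz).differentiableAt_iteratedFDeriv (by exact_mod_cast N.lt_succ_self)
            · rw [norm_fderiv_iteratedFDeriv]
              exact hC z hz
        _ = C * ‖v‖ := by rw [add_sub_cancel_left]
    calc ‖(fwdDiff v)^[N] (fwdDiff v f) x‖ ≤ C * ‖v‖ * ‖v‖ ^ N := by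
          refine ih (hs.inter (hs.translate_preimage_left v)) (fun y hy ↦ ?_) hbound
            fun k hk ↦ ⟨hx k (by lia), ?_⟩
          · exact ((hshift y hy.2).sub (hf y hy.1)).of_le hN
          · simpa only [Set.mem_preimage, add_assoc, ← succ_nsmul] using hx (k + 1) (by lia)
      _ = C * ‖v‖ ^ (N + 1) := by ring

lemma integral_fwdDiff_iter_mul {G : Type*} [AddCommGroup G] [MeasurableSpace G] [MeasurableAdd G]
    {μ : Measure G} [μ.IsAddRightInvariant] {f χ : G → ℂ} {v : G}
    (hχ : ∀ x, χ (x + v) = -χ x) (hf : Integrable (fun x ↦ f x * χ x) μ) (N : ℕ) :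
    ∫ x, (fwdDiff v)^[N] f x * χ x ∂μ = (-2) ^ N * ∫ x, f x * χ x ∂μ := by
  induction N generalizing f with
  | zero => simp
  | succ N ih =>
    have hΔ : (fun x ↦ fwdDiff v f x * χ x) =
        fun x ↦ -(f (x + v) * χ (x + v)) - f x * χ x := by
      ext x
      rw [hχ, fwdDiff]
      ring
    have hshift : Integrable (fun x ↦ -(f (x + v) * χ (x + v))) μ := (hf.comp_add_right v).neg
    have hint : ∫ x, fwdDiff v f x * χ x ∂μ = -2 * ∫ x, f x * χ x ∂μ := by
      rw [hΔ, integral_sub hshift hf, integral_neg,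
        integral_add_right_eq_self (fun x ↦ f x * χ x) v]
      ring
    rw [Function.iterate_succ_apply, ih (hΔ ▸ hshift.sub hf), hint]
    ring

end FiniteDifferences

section OrderOneSymbols

open scoped ContDiff

variable {ι E F H : Type*} [NormedAddCommGroup E] [NormedSpace ℝ E]
  [NormedAddCommGroup F] [NormedSpace ℝ F] [NormedAddCommGroup H] [NormedSpace ℝ H]

/-- A family `f i` of symbols of order one near the origin: `f i` is smooth away from `0`, vanishes
at `0`, and satisfies `‖∂ᵏ(f i)(ξ)‖ ≤ C ‖ξ‖ ^ (1 - k)` for every `k`, uniformly in `i` and locally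
uniformly in `ξ`. Both sides of the estimate are multiplied by `‖ξ‖ ^ k` to keep exponents in
`ℕ`. -/
structure IsOrderOneSymbol (f : ι → E → F) : Prop where
  contDiffOn : ∀ i, ContDiffOn ℝ ∞ (f i) {0}ᶜ
  apply_zero : ∀ i, f i 0 = 0
  exists_bound : ∀ (k : ℕ) (R : ℝ), ∃ C, ∀ i ξ, ξ ≠ 0 → ‖ξ‖ ≤ R →
    ‖ξ‖ ^ k * ‖iteratedFDeriv ℝ k (f i) ξ‖ ≤ C * ‖ξ‖

lemma exists_one_le_forall_le {P : ℕ → ℝ → Prop} (hmono : ∀ j C D, C ≤ D → P j C → P j D)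
    (hP : ∀ j, ∃ C, P j C) (k : ℕ) : ∃ C, 1 ≤ C ∧ ∀ j ≤ k, P j C := by
  choose C hC using hP
  obtain ⟨M, hM⟩ := (insert 1 ((Finset.range (k + 1)).image C)).exists_le
  refine ⟨M, hM 1 (Finset.mem_insert_self _ _), fun j hj ↦ hmono j _ _ (hM (C j) ?_) (hC j)⟩
  exact Finset.mem_insert_of_mem (Finset.mem_image_of_mem C (Finset.mem_range_succ_iff.2 hj))

/-- Faà di Bruno's bound at length scale `r`; the proof rescales `g ∘ f` as
`(g ∘ (r • ·)) ∘ (r⁻¹ • f)`. -/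
lemma pow_mul_norm_iteratedFDeriv_comp_le {g : F → H} {f : E → F} {s : Set E} {x : E} {k : ℕ}
    {r B D : ℝ} (hg : ContDiff ℝ k g) (hs : IsOpen s) (hf : ContDiffOn ℝ k f s) (hx : x ∈ s)
    (hr : 0 < r) (hD : 1 ≤ D) (hgB : ∀ j ≤ k, r ^ j * ‖iteratedFDeriv ℝ j g (f x)‖ ≤ B)
    (hfD : ∀ j, 1 ≤ j → j ≤ k → r ^ j * ‖iteratedFDeriv ℝ j f x‖ ≤ D * r) :
    r ^ k * ‖iteratedFDeriv ℝ k (g ∘ f) x‖ ≤ k.factorial * B * D ^ k := by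
  have hcomp : g ∘ f = (fun y ↦ g (r • y)) ∘ (r⁻¹ • f) := by
    ext y
    simp [smul_inv_smul₀ hr.ne']
  have hg_scaled : ∀ j ≤ k,
      ‖iteratedFDerivWithin ℝ j (fun y ↦ g (r • y)) Set.univ ((r⁻¹ • f) x)‖ ≤ B := fun j hj ↦ by
    rw [iteratedFDerivWithin_univ, iteratedFDeriv_comp_const_smul r (hg.of_le (mod_cast hj)),
      norm_smul, Pi.smul_apply, smul_inv_smul₀ hr.ne', norm_pow, Real.norm_of_nonneg hr.le]
    exact hgB j hj
  have hf_scaled : ∀ j, 1 ≤ j → j ≤ k →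
      ‖iteratedFDerivWithin ℝ j (r⁻¹ • f) s x‖ ≤ (D / r) ^ j := fun j hj1 hjk ↦ by
    rw [iteratedFDerivWithin_const_smul_apply ((hf x hx).of_le (mod_cast hjk)) hs.uniqueDiffOn hx,
      iteratedFDerivWithin_of_isOpen j hs hx, norm_smul, norm_inv, Real.norm_of_nonneg hr.le,
      div_pow, le_div_iff₀ (pow_pos hr j)]
    calc r⁻¹ * ‖iteratedFDeriv ℝ j f x‖ * r ^ j = r⁻¹ * (r ^ j * ‖iteratedFDeriv ℝ j f x‖) := by
          ring
      _ ≤ r⁻¹ * (D * r) := mul_le_mul_of_nonneg_left (hfD j hj1 hjk) (by positivity)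
      _ = D := by field_simp
      _ ≤ D ^ j := le_self_pow₀ hD (by lia)
  have hbound : ‖iteratedFDerivWithin ℝ k (g ∘ f) s x‖ ≤ k.factorial * B * (D / r) ^ k := by
    rw [hcomp]
    exact norm_iteratedFDerivWithin_comp_le (hg.comp (contDiff_const_smul r)).contDiffOn
      (hf.const_smul r⁻¹) le_rfl uniqueDiffOn_univ hs.uniqueDiffOn (Set.mapsTo_univ _ _) hx
      hg_scaled hf_scaled
  rw [iteratedFDerivWithin_of_isOpen k hs hx, div_pow, mul_div_assoc',
    le_div_iff₀ (pow_pos hr k)] at hbound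
  linarith

lemma exists_pow_mul_norm_iteratedFDeriv_le [ProperSpace F] {G : F → H} (hG : ContDiff ℝ ∞ G)
    (hG0 : G 0 = 0) (k : ℕ) (R : ℝ) :
    ∃ B, ∀ j ≤ k, ∀ r y, r ≤ R → ‖y‖ ≤ r → r ^ j * ‖iteratedFDeriv ℝ j G y‖ ≤ B * r := by
  obtain ⟨M, hM1, hM⟩ : ∃ M, 1 ≤ M ∧ ∀ m ≤ k + 1, ∀ y ∈ Metric.closedBall (0 : F) R,
      ‖iteratedFDeriv ℝ m G y‖ ≤ M :=
    exists_one_le_forall_le (fun _ _ _ hle h y hy ↦ (h y hy).trans hle)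
      (fun m ↦ (isCompact_closedBall 0 R).exists_bound_of_continuousOn
        (hG.continuous_iteratedFDeriv (mod_cast le_top)).continuousOn) (k + 1)
  refine ⟨(max 1 R) ^ k * M, fun j hj r y hrR hyr ↦ ?_⟩
  have hr : 0 ≤ r := (norm_nonneg y).trans hyr
  have hR : 0 ≤ R := hr.trans hrR
  have hy : y ∈ Metric.closedBall (0 : F) R := mem_closedBall_zero_iff.2 (hyr.trans hrR)
  cases j with
  | zero =>
    calc r ^ 0 * ‖iteratedFDeriv ℝ 0 G y‖ = ‖G y - G 0‖ := by simp [hG0]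
      _ ≤ M * ‖y - 0‖ := by
        refine (convex_closedBall 0 R).norm_image_sub_le_of_norm_fderiv_le (𝕜 := ℝ)
          (fun w _ ↦ hG.differentiable (by simp) w) (fun w hw ↦ ?_)
          (Metric.mem_closedBall_self hR) hy
        rw [← norm_iteratedFDeriv_one]
        exact hM 1 (by lia) w hw
      _ = 1 * M * ‖y‖ := by rw [sub_zero, one_mul]
      _ ≤ (max 1 R) ^ k * M * r := by
        gcongr
        exact one_le_pow₀ (le_max_left 1 R)
  | succ m =>
    calc r ^ (m + 1) * ‖iteratedFDeriv ℝ (m + 1) G y‖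
        = r ^ m * ‖iteratedFDeriv ℝ (m + 1) G y‖ * r := by ring
      _ ≤ (max 1 R) ^ m * M * r := by
        gcongr
        · exact hrR.trans (le_max_right 1 R)
        · exact hM _ (by lia) y hy
      _ ≤ (max 1 R) ^ k * M * r := by
        gcongr
        · exact le_max_left 1 R
        · lia

namespace IsOrderOneSymbol

variable {f : ι → E → F}

lemma exists_bound_forall_le (hf : IsOrderOneSymbol f) (k : ℕ) (R : ℝ) :
    ∃ C, 1 ≤ C ∧ ∀ j ≤ k, ∀ i ξ, ξ ≠ 0 → ‖ξ‖ ≤ R →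
      ‖ξ‖ ^ j * ‖iteratedFDeriv ℝ j (f i) ξ‖ ≤ C * ‖ξ‖ :=
  exists_one_le_forall_le (fun _ _ _ hle h i ξ hξ hξR ↦ (h i ξ hξ hξR).trans (by gcongr))
    (fun j ↦ hf.exists_bound j R) k

lemma exists_norm_le (hf : IsOrderOneSymbol f) (R : ℝ) :
    ∃ C, 0 ≤ C ∧ ∀ i ξ, ‖ξ‖ ≤ R → ‖f i ξ‖ ≤ C * ‖ξ‖ := by
  obtain ⟨C, hC1, hC⟩ := hf.exists_bound_forall_le 0 R
  refine ⟨C, zero_le_one.trans hC1, fun i ξ hξR ↦ ?_⟩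
  rcases eq_or_ne ξ 0 with rfl | hξ
  · simp [hf.apply_zero]
  · simpa using hC 0 le_rfl i ξ hξ hξR

lemma contDiffAt (hf : IsOrderOneSymbol f) (i : ι) {ξ : E} (hξ : ξ ≠ 0) (k : ℕ) :
    ContDiffAt ℝ k (f i) ξ :=
  ((hf.contDiffOn i).contDiffAt (isOpen_compl_singleton.mem_nhds hξ)).of_le (mod_cast le_top)

lemma of_contDiff [ProperSpace E] {G : E → F} (hG : ContDiff ℝ ∞ G) (hG0 : G 0 = 0) :
    IsOrderOneSymbol fun _ : ι ↦ G where
  contDiffOn _ := hG.contDiffOn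
  apply_zero _ := hG0
  exists_bound k R := by
    obtain ⟨B, hB⟩ := exists_pow_mul_norm_iteratedFDeriv_le hG hG0 k R
    exact ⟨B, fun _ ξ _ hξR ↦ hB k le_rfl ‖ξ‖ ξ hξR le_rfl⟩

lemma prodMk (hf : IsOrderOneSymbol f) {g : ι → E → H} (hg : IsOrderOneSymbol g) :
    IsOrderOneSymbol fun i ξ ↦ (f i ξ, g i ξ) where
  contDiffOn i := (hf.contDiffOn i).prodMk (hg.contDiffOn i)
  apply_zero i := by simp [hf.apply_zero, hg.apply_zero]
  exists_bound k R := by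
    obtain ⟨C, hC⟩ := hf.exists_bound k R
    obtain ⟨D, hD⟩ := hg.exists_bound k R
    refine ⟨max C D, fun i ξ hξ hξR ↦ ?_⟩
    rw [iteratedFDeriv_prodMk (hf.contDiffAt i hξ k) (hg.contDiffAt i hξ k) le_rfl,
      ContinuousMultilinearMap.opNorm_prod, mul_max_of_nonneg _ _ (by positivity),
      max_mul_of_nonneg _ _ (norm_nonneg ξ)]
    exact max_le_max (hC i ξ hξ hξR) (hD i ξ hξ hξR)

lemma comp [ProperSpace F] {G : F → H} (hG : ContDiff ℝ ∞ G) (hG0 : G 0 = 0)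
    (hf : IsOrderOneSymbol f) : IsOrderOneSymbol fun i ξ ↦ G (f i ξ) where
  contDiffOn i := hG.comp_contDiffOn (hf.contDiffOn i)
  apply_zero i := by rw [hf.apply_zero, hG0]
  exists_bound k R := by
    obtain ⟨C, hC1, hC⟩ := hf.exists_bound_forall_le k R
    obtain ⟨B, hB⟩ := exists_pow_mul_norm_iteratedFDeriv_le hG hG0 k (C * R)
    refine ⟨k.factorial * (B * C) * C ^ k, fun i ξ hξ hξR ↦ ?_⟩
    have hGB : ∀ j ≤ k, ‖ξ‖ ^ j * ‖iteratedFDeriv ℝ j G (f i ξ)‖ ≤ B * (C * ‖ξ‖) := fun j hj ↦ by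
      have hfξ : ‖f i ξ‖ ≤ C * ‖ξ‖ := by simpa using hC 0 k.zero_le i ξ hξ hξR
      calc ‖ξ‖ ^ j * ‖iteratedFDeriv ℝ j G (f i ξ)‖
          ≤ (C * ‖ξ‖) ^ j * ‖iteratedFDeriv ℝ j G (f i ξ)‖ := by
            gcongr
            exact le_mul_of_one_le_left (norm_nonneg ξ) hC1
        _ ≤ B * (C * ‖ξ‖) := hB j hj _ _ (by gcongr) hfξ
    calc ‖ξ‖ ^ k * ‖iteratedFDeriv ℝ k (G ∘ f i) ξ‖
        ≤ k.factorial * (B * (C * ‖ξ‖)) * C ^ k :=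
          pow_mul_norm_iteratedFDeriv_comp_le (hG.of_le (mod_cast le_top)) isOpen_compl_singleton
            ((hf.contDiffOn i).of_le (mod_cast le_top)) hξ (norm_pos_iff.2 hξ) hC1 hGB
            fun j _ hj ↦ hC j hj i ξ hξ hξR
      _ = k.factorial * (B * C) * C ^ k * ‖ξ‖ := by ring

lemma exists_norm_fwdDiff_iter_le_of_far (hf : IsOrderOneSymbol f) (N : ℕ) (R : ℝ) :
    ∃ C, 0 ≤ C ∧ ∀ i ξ v, ξ ≠ 0 → ‖ξ‖ ≤ R → 2 * N * ‖v‖ ≤ ‖ξ‖ →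
      ‖(fwdDiff v)^[N] (f i) ξ‖ ≤ C * (‖ξ‖ * (‖v‖ / ‖ξ‖) ^ N) := by
  obtain ⟨C, hC1, hC⟩ := hf.exists_bound_forall_le N (2 * R)
  refine ⟨2 ^ (N + 1) * C, by positivity, fun i ξ v hξ hξR hv ↦ ?_⟩
  have hξ0 : 0 < ‖ξ‖ := norm_pos_iff.2 hξ
  have hnear : ∀ y ∈ Metric.closedBall ξ (‖ξ‖ / 2), ‖ξ‖ / 2 ≤ ‖y‖ ∧ ‖y‖ ≤ 2 * ‖ξ‖ := by
    intro y hy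
    have h := abs_le.1 ((abs_norm_sub_norm_le y ξ).trans (mem_closedBall_iff_norm.1 hy))
    constructor <;> linarith
  have hderiv : ∀ y ∈ Metric.closedBall ξ (‖ξ‖ / 2),
      ‖iteratedFDeriv ℝ N (f i) y‖ ≤ C * (2 * ‖ξ‖) / (‖ξ‖ / 2) ^ N := by
    intro y hy
    obtain ⟨hlow, hhigh⟩ := hnear y hy
    rw [le_div_iff₀' (by positivity)]
    calc (‖ξ‖ / 2) ^ N * ‖iteratedFDeriv ℝ N (f i) y‖
        ≤ ‖y‖ ^ N * ‖iteratedFDeriv ℝ N (f i) y‖ := by gcongr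
      _ ≤ C * ‖y‖ :=
        hC N le_rfl i y (norm_pos_iff.1 (by linarith)) (by linarith)
      _ ≤ C * (2 * ‖ξ‖) := by gcongr
  calc ‖(fwdDiff v)^[N] (f i) ξ‖ ≤ C * (2 * ‖ξ‖) / (‖ξ‖ / 2) ^ N * ‖v‖ ^ N := by
        refine norm_fwdDiff_iter_le_of_norm_iteratedFDeriv_le (convex_closedBall ξ (‖ξ‖ / 2))
          (fun y hy ↦ hf.contDiffAt i (norm_pos_iff.1 (by linarith [(hnear y hy).1])) N) hderiv
          fun k hk ↦ ?_
        have hkv : ‖k • v‖ ≤ N * ‖v‖ := norm_nsmul_le.trans (by gcongr)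
        rw [mem_closedBall_iff_norm, add_sub_cancel_left]
        linarith
    _ = 2 ^ (N + 1) * C * (‖ξ‖ * (‖v‖ / ‖ξ‖) ^ N) := by
        rw [div_pow, div_pow]
        field_simp
        ring

lemma exists_norm_fwdDiff_iter_le_of_near (hf : IsOrderOneSymbol f) (N : ℕ) (R : ℝ) :
    ∃ C, 0 ≤ C ∧ ∀ i ξ v, ‖ξ‖ ≤ R → ‖v‖ ≤ R → ‖ξ‖ ≤ 2 * N * ‖v‖ →
      ‖(fwdDiff v)^[N] (f i) ξ‖ ≤ C * ‖v‖ := by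
  obtain ⟨C, hC0, hC⟩ := hf.exists_norm_le ((N + 1) * R)
  refine ⟨2 ^ N * (C * (3 * N)), by positivity, fun i ξ v hξR hvR hv ↦ ?_⟩
  have hpoint : ∀ k ≤ N, ‖f i (ξ + k • v)‖ ≤ C * (3 * N * ‖v‖) := fun k hk ↦ by
    have hkv : ‖k • v‖ ≤ N * ‖v‖ := norm_nsmul_le.trans (by gcongr)
    have htranslate : ‖ξ + k • v‖ ≤ ‖ξ‖ + N * ‖v‖ := (norm_add_le _ _).trans (by gcongr)
    calc ‖f i (ξ + k • v)‖ ≤ C * ‖ξ + k • v‖ := hC i _ (htranslate.trans (by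
          rw [add_mul, one_mul, add_comm]; gcongr))
      _ ≤ C * (3 * N * ‖v‖) := by gcongr; linarith
  calc ‖(fwdDiff v)^[N] (f i) ξ‖ ≤ 2 ^ N * (C * (3 * N * ‖v‖)) := norm_fwdDiff_iter_le N hpoint
    _ = 2 ^ N * (C * (3 * N)) * ‖v‖ := by ring

/-- Far from the origin the bound comes from the `N`-th derivative, near the origin from the size
of `f i`; the exponent `s` interpolates between the two. -/
lemma exists_norm_fwdDiff_iter_le (hf : IsOrderOneSymbol f) {N : ℕ} {s : ℝ} (hs : 1 ≤ s)
    (hsN : s ≤ N) (R : ℝ) :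
    ∃ C, 0 ≤ C ∧ ∀ i ξ v, ξ ≠ 0 → ‖ξ‖ ≤ R → ‖v‖ ≤ R →
      ‖(fwdDiff v)^[N] (f i) ξ‖ ≤ C * (‖v‖ ^ s * ‖ξ‖ ^ (1 - s)) := by
  obtain ⟨C, hC0, hC⟩ := hf.exists_norm_fwdDiff_iter_le_of_far N R
  obtain ⟨D, hD0, hD⟩ := hf.exists_norm_fwdDiff_iter_le_of_near N R
  have hN : (1 : ℝ) ≤ N := hs.trans hsN
  refine ⟨C + D * (2 * N) ^ s, by positivity, fun i ξ v hξ hξR hvR ↦ ?_⟩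
  have hξ0 : 0 < ‖ξ‖ := norm_pos_iff.2 hξ
  set q : ℝ := ‖v‖ / ‖ξ‖ with hq
  have hq0 : 0 ≤ q := by positivity
  have hv : ‖v‖ = q * ‖ξ‖ := by rw [hq, div_mul_cancel₀ _ hξ0.ne']
  have hscale : ‖v‖ ^ s * ‖ξ‖ ^ (1 - s) = ‖ξ‖ * q ^ s := by
    rw [hv, Real.mul_rpow hq0 hξ0.le, Real.rpow_sub hξ0, Real.rpow_one]
    field_simp
  rw [hscale]
  rcases le_total (2 * N * ‖v‖) ‖ξ‖ with hfar | hnear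
  · have hq1 : q ≤ 1 := (div_le_one hξ0).2 (by nlinarith [norm_nonneg v])
    calc ‖(fwdDiff v)^[N] (f i) ξ‖ ≤ C * (‖ξ‖ * q ^ N) := hC i ξ v hξ hξR hfar
      _ ≤ C * (‖ξ‖ * q ^ s) := by
        gcongr
        rw [← Real.rpow_natCast]
        exact Real.rpow_le_rpow_of_exponent_ge' hq0 hq1 (by linarith) hsN
      _ ≤ (C + D * (2 * N) ^ s) * (‖ξ‖ * q ^ s) := by
        gcongr
        exact le_add_of_nonneg_right (by positivity)
  · have hq1 : 1 ≤ 2 * N * q := by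
      rw [hq, mul_div_assoc', one_le_div hξ0]
      exact hnear
    have hq_le : q ≤ (2 * N) ^ s * q ^ s :=
      calc q ≤ 2 * N * q := le_mul_of_one_le_left hq0 (by linarith)
        _ ≤ (2 * N * q) ^ s := Real.self_le_rpow_of_one_le hq1 hs
        _ = (2 * N) ^ s * q ^ s := Real.mul_rpow (by positivity) hq0
    calc ‖(fwdDiff v)^[N] (f i) ξ‖ ≤ D * (q * ‖ξ‖) := hv ▸ hD i ξ v hξR hvR hnear
      _ ≤ D * ((2 * N) ^ s * q ^ s * ‖ξ‖) := by gcongr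
      _ = D * (2 * N) ^ s * (‖ξ‖ * q ^ s) := by ring
      _ ≤ (C + D * (2 * N) ^ s) * (‖ξ‖ * q ^ s) := by
        gcongr
        exact le_add_of_nonneg_left hC0

lemma mul_exp_sub_apply_zero [ProperSpace E] {η : E → ℂ} (hη : ContDiff ℝ ∞ η)
    {ψ : ι → E → ℝ} (hψ : IsOrderOneSymbol ψ) :
    IsOrderOneSymbol fun i ξ ↦ η ξ * exp (I * ofReal (ψ i ξ)) - η 0 := by
  have hG : ContDiff ℝ ∞ fun p : E × ℝ ↦ η p.1 * exp (I * ofReal p.2) - η 0 :=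
    ((hη.comp contDiff_fst).mul
      (contDiff_const.mul (ofRealCLM.contDiff.comp contDiff_snd)).cexp).sub contDiff_const
  exact ((of_contDiff contDiff_id rfl).prodMk hψ).comp hG (by simp)

end IsOrderOneSymbol

end OrderOneSymbols

section PartialDerivatives

open scoped ContDiff

lemma norm_le_sum_norm_apply_orthonormalBasis {κ E F : Type*} [Fintype κ] [NormedAddCommGroup E]
    [InnerProductSpace ℝ E] [NormedAddCommGroup F] [NormedSpace ℝ F] (b : OrthonormalBasis κ ℝ E)
    {k : ℕ} (m : E [×k]→L[ℝ] F) : ‖m‖ ≤ ∑ σ : Fin k → κ, ‖m fun l ↦ b (σ l)‖ := by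
  classical
  refine m.opNorm_le_bound (by positivity) fun v ↦ ?_
  have hexpand : m v = ∑ σ : Fin k → κ, (∏ l, ⟪b (σ l), v l⟫) • m fun l ↦ b (σ l) := by
    conv_lhs => rw [show v = fun l ↦ ∑ i, ⟪b i, v l⟫ • b i from
      funext fun l ↦ (b.sum_repr' (v l)).symm]
    simp only [m.map_sum, m.map_smul_univ]
  have hcoord (σ : Fin k → κ) : ‖∏ l, ⟪b (σ l), v l⟫‖ ≤ ∏ l, ‖v l‖ := by
    rw [norm_prod]
    refine Finset.prod_le_prod (fun _ _ ↦ norm_nonneg _) fun l _ ↦ ?_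
    simpa using norm_inner_le_norm (𝕜 := ℝ) (b (σ l)) (v l)
  calc ‖m v‖ ≤ ∑ σ : Fin k → κ, ‖(∏ l, ⟪b (σ l), v l⟫) • m fun l ↦ b (σ l)‖ :=
        hexpand ▸ norm_sum_le _ _
    _ ≤ ∑ σ : Fin k → κ, ‖m fun l ↦ b (σ l)‖ * ∏ l, ‖v l‖ := by
        gcongr with σ
        rw [norm_smul, mul_comm]
        gcongr
        exact hcoord σ
    _ = (∑ σ : Fin k → κ, ‖m fun l ↦ b (σ l)‖) * ∏ l, ‖v l‖ := (Finset.sum_mul _ _ _).symm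

lemma fderiv_apply_self_of_homogeneous {E : Type*} [NormedAddCommGroup E] [NormedSpace ℝ E]
    {g : E → ℝ} {x : E} (hg : DifferentiableAt ℝ g x)
    (hhom : ∀ t : ℝ, 0 < t → g (t • x) = t * g x) :
    fderiv ℝ g x x = g x := by
  have hchain : HasDerivAt (fun t : ℝ ↦ g (t • x)) (fderiv ℝ g x x) 1 := by
    have hg' : HasFDerivAt g (fderiv ℝ g x) ((1 : ℝ) • x) := by
      rw [one_smul]
      exact hg.hasFDerivAt
    simpa [Function.comp_def] using
      hg'.comp_hasDerivAt (1 : ℝ) ((hasDerivAt_id (1 : ℝ)).smul_const x)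
  have hlinear : HasDerivAt (fun t : ℝ ↦ g (t • x)) (g x) 1 :=
    (hasDerivAt_mul_const (g x)).congr_of_eventuallyEq
      ((eventually_gt_nhds one_pos).mono hhom)
  exact hchain.unique hlinear

variable {n : ℕ} {F : Type} [NormedAddCommGroup F] [NormedSpace ℝ F] {f g : En n → F}
  {U : Set (En n)}

lemma contDiffOn_pd (hU : IsOpen U) (hf : ContDiffOn ℝ ∞ f U) (i : Fin n) :
    ContDiffOn ℝ ∞ (pd i f) U :=
  (hf.fderiv_of_isOpen hU (by simp)).clm_apply contDiffOn_const

lemma contDiffOn_foldr_pd (hU : IsOpen U) (hf : ContDiffOn ℝ ∞ f U) (L : List (Fin n)) :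
    ContDiffOn ℝ ∞ (L.foldr pd f) U := by
  induction L with
  | nil => exact hf
  | cons i L ih => exact contDiffOn_pd hU ih i

lemma eqOn_pd (hU : IsOpen U) (hfg : Set.EqOn f g U) (i : Fin n) :
    Set.EqOn (pd i f) (pd i g) U := fun x hx ↦ by
  rw [pd, (hfg.eventuallyEq_of_mem (hU.mem_nhds hx)).fderiv_eq, ← pd]

lemma eqOn_pd_comm (hU : IsOpen U) (hf : ContDiffOn ℝ ∞ f U) (i j : Fin n) :
    Set.EqOn (pd i (pd j f)) (pd j (pd i f)) U := fun x hx ↦ by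
  have hfx : ContDiffAt ℝ ∞ f x := hf.contDiffAt (hU.mem_nhds hx)
  have hdiff : DifferentiableAt ℝ (fderiv ℝ f) x :=
    (hfx.fderiv_right (m := ∞) (by simp)).differentiableAt (by simp)
  have hsecond (i j : Fin n) : pd i (pd j f) x = fderiv ℝ (fderiv ℝ f) x
      (EuclideanSpace.single i 1) (EuclideanSpace.single j 1) := by
    change fderiv ℝ (fun y ↦ fderiv ℝ f y (EuclideanSpace.single j 1)) x _ = _
    simp [fderiv_clm_apply hdiff (differentiableAt_const _)]
  rw [hsecond, hsecond]
  refine hfx.isSymmSndFDerivAt ?_ _ _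
  rw [minSmoothness_of_isRCLikeNormedField]
  exact ENat.LEInfty.out

lemma eqOn_foldr_pd_of_perm (hU : IsOpen U) (hf : ContDiffOn ℝ ∞ f U) {L L' : List (Fin n)}
    (h : L.Perm L') : Set.EqOn (L.foldr pd f) (L'.foldr pd f) U := by
  induction h with
  | nil => exact Set.eqOn_refl _ _
  | cons i _ ih => exact eqOn_pd hU ih i
  | swap i j L => exact eqOn_pd_comm hU (contDiffOn_foldr_pd hU hf L) j i
  | trans _ _ ih ih' => exact ih.trans ih'

lemma eqOn_iteratedFDeriv_apply_single (hU : IsOpen U) (hf : ContDiffOn ℝ ∞ f U) {k : ℕ}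
    (σ : Fin k → Fin n) :
    Set.EqOn (fun x ↦ iteratedFDeriv ℝ k f x fun l ↦ EuclideanSpace.single (σ l) 1)
      ((List.ofFn σ).foldr pd f) U := by
  induction k with
  | zero => intro x _; simp
  | succ k ih =>
    intro x hx
    have hdiff : DifferentiableAt ℝ (iteratedFDeriv ℝ k f) x :=
      (hf.contDiffAt (hU.mem_nhds hx)).differentiableAt_iteratedFDeriv
        (mod_cast ENat.natCast_lt_top k)
    beta_reduce
    rw [List.ofFn_succ, List.foldr_cons, ← eqOn_pd hU (ih fun l ↦ σ l.succ) (σ 0) hx, pd,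
      fderiv_continuousMultilinear_apply_const_apply hdiff, iteratedFDeriv_succ_apply_left]
    rfl

lemma mderiv_eq_foldr_pd (α : Fin n → ℕ) (f : En n → F) :
    mderiv α f = ((List.finRange n).flatMap fun i ↦ List.replicate (α i) i).foldr pd f := by
  have hiter (i : Fin n) (g : En n → F) (m : ℕ) : (List.replicate m i).foldr pd g =
      (pd i)^[m] g := by
    induction m with
    | zero => rfl
    | succ m ih => rw [List.replicate_succ, List.foldr_cons, ih, Function.iterate_succ_apply']
  simp only [mderiv, List.foldr_flatMap, hiter]

lemma mderiv_zero (f : En n → F) : mderiv 0 f = f :=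
  List.foldr_fixed' (fun _ ↦ rfl) _

/-- The multi-index `α` with `∂^α = ∂_{σ 0} ⋯ ∂_{σ (k - 1)}`: it counts how often each coordinate
direction occurs among the `σ l`. -/
def multiIndexOf {k : ℕ} (σ : Fin k → Fin n) : Fin n → ℕ := fun i ↦ (List.ofFn σ).count i

lemma flatMap_replicate_multiIndexOf_perm {k : ℕ} (σ : Fin k → Fin n) :
    ((List.finRange n).flatMap fun i ↦ List.replicate (multiIndexOf σ i) i).Perm
      (List.ofFn σ) := by
  refine List.perm_iff_count.2 fun j ↦ ?_
  simp [List.count_flatMap, List.count_replicate, multiIndexOf, ← List.ofFn_eq_map, List.sum_ofFn,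
    Function.comp_def]

lemma mdeg_multiIndexOf {k : ℕ} (σ : Fin k → Fin n) : mdeg (multiIndexOf σ) = k := by
  have hlen := (flatMap_replicate_multiIndexOf_perm σ).length_eq
  simpa [mdeg, List.length_flatMap, ← List.ofFn_eq_map, List.sum_ofFn] using hlen

lemma iteratedFDeriv_apply_single_eq_mderiv (hU : IsOpen U) (hf : ContDiffOn ℝ ∞ f U) {k : ℕ}
    (σ : Fin k → Fin n) {x : En n} (hx : x ∈ U) :
    iteratedFDeriv ℝ k f x (fun l ↦ EuclideanSpace.single (σ l) 1) =
      mderiv (multiIndexOf σ) f x := by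
  rw [mderiv_eq_foldr_pd, eqOn_foldr_pd_of_perm hU hf (flatMap_replicate_multiIndexOf_perm σ) hx]
  exact eqOn_iteratedFDeriv_apply_single hU hf σ hx

lemma norm_iteratedFDeriv_le_sum_norm_mderiv (hU : IsOpen U) (hf : ContDiffOn ℝ ∞ f U) {x : En n}
    (hx : x ∈ U) (k : ℕ) :
    ‖iteratedFDeriv ℝ k f x‖ ≤ ∑ σ : Fin k → Fin n, ‖mderiv (multiIndexOf σ) f x‖ := by
  simpa [iteratedFDeriv_apply_single_eq_mderiv hU hf _ hx] using
    norm_le_sum_norm_apply_orthonormalBasis (EuclideanSpace.basisFun (Fin n) ℝ)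
      (iteratedFDeriv ℝ k f x)

namespace PhiClass

variable {ψ : En n → En n → ℝ}

lemma contDiffOn {m : ℕ} (hψ : PhiClass m ψ) (x : En n) : ContDiffOn ℝ ∞ (ψ x) {0}ᶜ :=
  hψ.1.comp (contDiffOn_const.prodMk contDiffOn_id) fun _ hξ ↦ hξ

lemma exists_pow_mul_norm_iteratedFDeriv_le {m k : ℕ} (hψ : PhiClass m ψ) (hk : m ≤ k) :
    ∃ C, ∀ x ξ, ξ ≠ 0 → ‖ξ‖ ^ k * ‖iteratedFDeriv ℝ k (ψ x) ξ‖ ≤ C * ‖ξ‖ := by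
  have hpartial (σ : Fin k → Fin n) : ∃ C, ∀ x ξ, ξ ≠ 0 →
      ‖ξ‖ ^ k * ‖mderiv (multiIndexOf σ) (ψ x) ξ‖ ≤ C * ‖ξ‖ := by
    obtain ⟨C, hC⟩ := hψ.2.2 (multiIndexOf σ) 0
      (by rw [mdeg_multiIndexOf]; exact hk.trans (Nat.le_add_right _ _))
    refine ⟨C, fun x ξ hξ ↦ ?_⟩
    have hξ0 : 0 < ‖ξ‖ := norm_pos_iff.2 hξ
    have hbound := hC x ξ hξ
    rw [mixedD, mdeg_multiIndexOf, Real.rpow_sub hξ0, Real.rpow_one, Real.rpow_natCast,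
      div_mul_eq_mul_div, div_le_iff₀ hξ0] at hbound
    simpa only [mderiv_zero, ← Real.norm_eq_abs] using hbound
  choose C hC using hpartial
  refine ⟨∑ σ, C σ, fun x ξ hξ ↦ ?_⟩
  calc ‖ξ‖ ^ k * ‖iteratedFDeriv ℝ k (ψ x) ξ‖
      ≤ ‖ξ‖ ^ k * ∑ σ : Fin k → Fin n, ‖mderiv (multiIndexOf σ) (ψ x) ξ‖ := by
        gcongr
        exact norm_iteratedFDeriv_le_sum_norm_mderiv isOpen_compl_singleton (hψ.contDiffOn x) hξ k
    _ ≤ (∑ σ, C σ) * ‖ξ‖ := by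
        rw [Finset.mul_sum, Finset.sum_mul]
        exact Finset.sum_le_sum fun σ _ ↦ hC σ x ξ hξ

lemma isOrderOneSymbol (hψ : PhiClass 1 ψ) : IsOrderOneSymbol ψ where
  contDiffOn := hψ.contDiffOn
  apply_zero x := by
    have h := hψ.2.1 x 0 2 two_pos
    rw [smul_zero] at h
    linarith
  exists_bound k _ := by
    cases k with
    | zero =>
      obtain ⟨C, hC⟩ := hψ.exists_pow_mul_norm_iteratedFDeriv_le le_rfl
      refine ⟨C, fun x ξ hξ _ ↦ ?_⟩
      have hdiff : DifferentiableAt ℝ (ψ x) ξ :=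
        ((hψ.contDiffOn x).contDiffAt (isOpen_compl_singleton.mem_nhds hξ)).differentiableAt
          (by simp)
      calc ‖ξ‖ ^ 0 * ‖iteratedFDeriv ℝ 0 (ψ x) ξ‖ = ‖fderiv ℝ (ψ x) ξ ξ‖ := by
            rw [pow_zero, one_mul, norm_iteratedFDeriv_zero,
              fderiv_apply_self_of_homogeneous hdiff (hψ.2.1 x ξ)]
        _ ≤ ‖ξ‖ ^ 1 * ‖iteratedFDeriv ℝ 1 (ψ x) ξ‖ := by
            rw [pow_one, norm_iteratedFDeriv_one, mul_comm]
            exact (fderiv ℝ (ψ x) ξ).le_opNorm ξ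
        _ ≤ C * ‖ξ‖ := hC x ξ hξ
    | succ k =>
      obtain ⟨C, hC⟩ := hψ.exists_pow_mul_norm_iteratedFDeriv_le (Nat.le_add_left 1 k)
      exact ⟨C, fun x ξ hξ _ ↦ hC x ξ hξ⟩

end PhiClass

end PartialDerivatives

section OscillatoryIntegral

open scoped ContDiff

lemma le_mul_one_add_rpow_neg {g M s t : ℝ} (hM : 0 ≤ M) (hs : 0 ≤ s) (ht : 0 ≤ t) (hg : g ≤ M)
    (hgt : 1 ≤ t → g ≤ M * t ^ (-s)) : g ≤ M * 2 ^ s * (1 + t) ^ (-s) := by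
  have hmax : g ≤ M * (max 1 t) ^ (-s) := by
    rcases le_total t 1 with h | h
    · simpa [max_eq_left h] using hg
    · simpa [max_eq_right h] using hgt h
  have hpos : 0 < max 1 t := lt_max_of_lt_left one_pos
  calc g ≤ M * (max 1 t) ^ (-s) := hmax
    _ = M * 2 ^ s * (2 * max 1 t) ^ (-s) := by
      rw [Real.mul_rpow two_pos.le hpos.le, Real.rpow_neg two_pos.le]
      field_simp
    _ ≤ M * 2 ^ s * (1 + t) ^ (-s) := by
      gcongr 1
      · exact Real.rpow_le_rpow_of_nonpos (by positivity)
          (by linarith [le_max_left 1 t, le_max_right 1 t]) (neg_nonpos.2 hs)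

lemma integrableOn_closedBall_norm_rpow {E : Type*} [NormedAddCommGroup E] [NormedSpace ℝ E]
    [FiniteDimensional ℝ E] [MeasurableSpace E] [BorelSpace E] (μ : Measure E)
    [μ.IsAddHaarMeasure] {p : ℝ} (hE : 1 ≤ Module.finrank ℝ E) (hp : -Module.finrank ℝ E < p)
    (R : ℝ) : IntegrableOn (fun x : E ↦ ‖x‖ ^ p) (Metric.closedBall 0 R) μ := by
  have hball : IntegrableOn (fun x : E ↦ ‖x‖ ^ p) (Metric.ball 0 (R + 1)) μ := by
    refine integrableOn_ball_of_norm_le_rpow (C := 1) (α := -p) hE (by linarith) ?_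
      (measurable_norm.pow_const p).aestronglyMeasurable
    refine Filter.Eventually.of_forall fun x ↦ ?_
    rw [neg_neg, one_mul, Real.norm_of_nonneg (by positivity)]
  exact hball.mono_set (Metric.closedBall_subset_ball (lt_add_one R))

variable {ι E : Type*} [NormedAddCommGroup E] [InnerProductSpace ℝ E]

lemma exp_inner_add_half_period {z : E} (hz : z ≠ 0) (ξ : E) :
    exp (I * ofReal ⟪z, ξ + (π / ‖z‖ ^ 2) • z⟫) = -exp (I * ofReal ⟪z, ξ⟫) := by
  have hinner : ⟪z, ξ + (π / ‖z‖ ^ 2) • z⟫ = ⟪z, ξ⟫ + π := by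
    rw [inner_add_right, inner_smul_right, real_inner_self_eq_norm_sq,
      div_mul_cancel₀ _ (by simpa using hz)]
  rw [hinner, ofReal_add, mul_add, Complex.exp_add, mul_comm I π, exp_pi_mul_I, mul_neg_one]

lemma norm_integral_mul_exp_inner_le_integral_norm_fwdDiff_iter [MeasurableSpace E]
    [BorelSpace E] {μ : Measure E} [μ.IsAddRightInvariant] {f : E → ℂ} {z : E}
    (hz : z ≠ 0) (hf : Integrable (fun ξ ↦ f ξ * exp (I * ofReal ⟪z, ξ⟫)) μ)
    (N : ℕ) :
    ‖∫ ξ, f ξ * exp (I * ofReal ⟪z, ξ⟫) ∂μ‖ ≤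
      ∫ ξ, ‖(fwdDiff ((π / ‖z‖ ^ 2) • z))^[N] f ξ‖ ∂μ := by
  calc ‖∫ ξ, f ξ * exp (I * ofReal ⟪z, ξ⟫) ∂μ‖
      ≤ 2 ^ N * ‖∫ ξ, f ξ * exp (I * ofReal ⟪z, ξ⟫) ∂μ‖ :=
        le_mul_of_one_le_left (norm_nonneg _) (one_le_pow₀ one_le_two)
    _ = ‖∫ ξ, (fwdDiff ((π / ‖z‖ ^ 2) • z))^[N] f ξ * exp (I * ofReal ⟪z, ξ⟫) ∂μ‖ := by
      rw [integral_fwdDiff_iter_mul (exp_inner_add_half_period hz) hf, norm_mul, norm_pow,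
        norm_neg, Complex.norm_ofNat]
    _ ≤ ∫ ξ, ‖(fwdDiff ((π / ‖z‖ ^ 2) • z))^[N] f ξ‖ ∂μ := by
      refine (norm_integral_le_integral_norm _).trans_eq (integral_congr_ae (.of_forall fun ξ ↦ ?_))
      simp only [norm_mul, norm_exp_I_mul_ofReal, mul_one]

variable {a : ι → E → ℂ} {c : ℂ} {R : ℝ}

namespace IsOrderOneSymbol

lemma exists_norm_le_of_support_subset (ha : IsOrderOneSymbol fun i ξ ↦ a i ξ - c)
    (hR : ∀ i, Function.support (a i) ⊆ Metric.closedBall 0 R) :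
    ∃ B, 0 ≤ B ∧ ∀ i ξ, ‖a i ξ‖ ≤ B := by
  obtain ⟨C, hC0, hC⟩ := ha.exists_norm_le R
  refine ⟨‖c‖ + C * |R|, by positivity, fun i ξ ↦ ?_⟩
  by_cases hξ : ξ ∈ Function.support (a i)
  · have hξR : ‖ξ‖ ≤ R := mem_closedBall_zero_iff.1 (hR i hξ)
    calc ‖a i ξ‖ = ‖c + (a i ξ - c)‖ := by rw [add_sub_cancel]
      _ ≤ ‖c‖ + C * ‖ξ‖ := (norm_add_le _ _).trans (by gcongr; exact hC i ξ hξR)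
      _ ≤ ‖c‖ + C * |R| := by gcongr; exact hξR.trans (le_abs_self R)
  · rw [Function.notMem_support.1 hξ, norm_zero]
    positivity

variable [MeasurableSpace E]

lemma exists_norm_integral_mul_exp_inner_le_const [FiniteDimensional ℝ E]
    (μ : Measure E) [IsFiniteMeasureOnCompacts μ] (ha : IsOrderOneSymbol fun i ξ ↦ a i ξ - c)
    (hR : ∀ i, Function.support (a i) ⊆ Metric.closedBall 0 R) :
    ∃ A, 0 ≤ A ∧ ∀ i z, ‖∫ ξ, a i ξ * exp (I * ofReal ⟪z, ξ⟫) ∂μ‖ ≤ A := by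
  obtain ⟨B, hB0, hB⟩ := ha.exists_norm_le_of_support_subset hR
  refine ⟨B * μ.real (Metric.closedBall 0 R), by positivity, fun i z ↦ ?_⟩
  rw [← setIntegral_eq_integral_of_forall_compl_eq_zero (s := Metric.closedBall 0 R)
    fun ξ hξ ↦ by rw [Function.notMem_support.1 fun h ↦ hξ (hR i h), zero_mul]]
  refine norm_setIntegral_le_of_norm_le_const measure_closedBall_lt_top fun ξ _ ↦ ?_
  rw [norm_mul, norm_exp_I_mul_ofReal, mul_one]
  exact hB i ξ

variable [BorelSpace E]

lemma measurable_of_sub_const (ha : IsOrderOneSymbol fun i ξ ↦ a i ξ - c) (i : ι) :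
    Measurable (a i) := by
  refine measurable_of_continuousOn_compl_singleton 0 ?_
  exact ((ha.contDiffOn i).continuousOn.add (continuousOn_const (c := c))).congr fun ξ _ ↦
    (sub_add_cancel (a i ξ) c).symm

variable [FiniteDimensional ℝ E] (μ : Measure E) [μ.IsAddHaarMeasure]

lemma integrable_mul_exp_inner (ha : IsOrderOneSymbol fun i ξ ↦ a i ξ - c)
    (hR : ∀ i, Function.support (a i) ⊆ Metric.closedBall 0 R) (i : ι) (z : E) :
    Integrable (fun ξ ↦ a i ξ * exp (I * ofReal ⟪z, ξ⟫)) μ := by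
  obtain ⟨B, -, hB⟩ := ha.exists_norm_le_of_support_subset hR
  have ha_int : Integrable (a i) μ := by
    rw [← integrableOn_iff_integrable_of_support_subset (hR i)]
    exact Measure.integrableOn_of_bounded measure_closedBall_lt_top.ne
      (ha.measurable_of_sub_const i).aestronglyMeasurable (.of_forall (hB i))
  refine ha_int.mul_bdd (c := 1) (Continuous.aestronglyMeasurable (by fun_prop)) ?_
  exact .of_forall fun ξ ↦ (norm_exp_I_mul_ofReal _).le

lemma exists_integral_norm_fwdDiff_iter_le (ha : IsOrderOneSymbol fun i ξ ↦ a i ξ - c)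
    (hR : ∀ i, Function.support (a i) ⊆ Metric.closedBall 0 R) (hE : 1 ≤ Module.finrank ℝ E)
    {N : ℕ} {s : ℝ} (hs : 1 ≤ s) (hsE : s < Module.finrank ℝ E + 1) (hsN : s ≤ (N + 1 : ℕ))
    (T : ℝ) :
    ∃ C, 0 ≤ C ∧ ∀ i v, ‖v‖ ≤ T → ∫ ξ, ‖(fwdDiff v)^[N + 1] (a i) ξ‖ ∂μ ≤ C * ‖v‖ ^ s := by
  have : Nontrivial E := Module.finrank_pos_iff.1 hE
  set S := |R| + (N + 1 : ℕ) * |T| with hS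
  obtain ⟨C, hC0, hC⟩ := ha.exists_norm_fwdDiff_iter_le hs hsN S
  refine ⟨C * ∫ ξ in Metric.closedBall (0 : E) S, ‖ξ‖ ^ (1 - s) ∂μ, by positivity, fun i v hv ↦ ?_⟩
  have hvT : ‖v‖ ≤ |T| := hv.trans (le_abs_self T)
  have hvS : ‖v‖ ≤ S := by
    have : |T| ≤ (N + 1 : ℕ) * |T| := le_mul_of_one_le_left (abs_nonneg T) (by simp)
    linarith [abs_nonneg R]
  have hzero : ∀ ξ ∉ Metric.closedBall (0 : E) S, ‖(fwdDiff v)^[N + 1] (a i) ξ‖ = 0 := by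
    intro ξ hξ
    rw [norm_eq_zero]
    refine fwdDiff_iter_eq_zero_of_support_subset (hR i) (lt_of_le_of_lt ?_
      (not_le.1 (mt mem_closedBall_zero_iff.2 hξ)))
    rw [hS]
    gcongr
    exact le_abs_self R
  have hbound : ∀ᵐ ξ ∂μ.restrict (Metric.closedBall 0 S),
      ‖(fwdDiff v)^[N + 1] (a i) ξ‖ ≤ C * ‖v‖ ^ s * ‖ξ‖ ^ (1 - s) := by
    filter_upwards [ae_restrict_mem Metric.isClosed_closedBall.measurableSet,
      ae_restrict_of_ae (Measure.ae_ne μ 0)] with ξ hξS hξ0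
    rw [← fwdDiff_iter_succ_sub_const (a i) c, mul_assoc]
    exact hC i ξ v hξ0 (mem_closedBall_zero_iff.1 hξS) hvS
  calc ∫ ξ, ‖(fwdDiff v)^[N + 1] (a i) ξ‖ ∂μ
      = ∫ ξ in Metric.closedBall 0 S, ‖(fwdDiff v)^[N + 1] (a i) ξ‖ ∂μ :=
        (setIntegral_eq_integral_of_forall_compl_eq_zero hzero).symm
    _ ≤ ∫ ξ in Metric.closedBall 0 S, C * ‖v‖ ^ s * ‖ξ‖ ^ (1 - s) ∂μ :=
        integral_mono_of_nonneg (.of_forall fun _ ↦ norm_nonneg _)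
          ((integrableOn_closedBall_norm_rpow μ hE (by linarith) S).const_mul _) hbound
    _ = (C * ∫ ξ in Metric.closedBall 0 S, ‖ξ‖ ^ (1 - s) ∂μ) * ‖v‖ ^ s := by
        rw [integral_const_mul]
        ring

lemma exists_norm_integral_mul_exp_inner_le_rpow (ha : IsOrderOneSymbol fun i ξ ↦ a i ξ - c)
    (hR : ∀ i, Function.support (a i) ⊆ Metric.closedBall 0 R) {α : ℝ} (hα0 : 0 ≤ α)
    (hα1 : α < 1) :
    ∃ B, 0 ≤ B ∧ ∀ i (z : E), 1 ≤ ‖z‖ →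
      ‖∫ ξ, a i ξ * exp (I * ofReal ⟪z, ξ⟫) ∂μ‖ ≤ B * ‖z‖ ^ (-(Module.finrank ℝ E + α)) := by
  rcases subsingleton_or_nontrivial E with hE | hE
  · exact ⟨0, le_rfl, fun i z hz ↦ by norm_num [Subsingleton.elim z 0] at hz⟩
  have hd : 1 ≤ Module.finrank ℝ E := Module.finrank_pos
  have hd' : (1 : ℝ) ≤ Module.finrank ℝ E := mod_cast hd
  set s : ℝ := Module.finrank ℝ E + α
  obtain ⟨C, hC0, hC⟩ := ha.exists_integral_norm_fwdDiff_iter_le μ hR hd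
    (N := Module.finrank ℝ E) (s := s) (by linarith) (by linarith) (by push_cast; linarith) π
  refine ⟨C * π ^ s, by positivity, fun i z hz ↦ ?_⟩
  have hz0 : 0 < ‖z‖ := zero_lt_one.trans_le hz
  have hv : ‖(π / ‖z‖ ^ 2) • z‖ = π / ‖z‖ := by
    rw [norm_smul, Real.norm_of_nonneg (by positivity)]
    field_simp
  calc ‖∫ ξ, a i ξ * exp (I * ofReal ⟪z, ξ⟫) ∂μ‖
      ≤ ∫ ξ, ‖(fwdDiff ((π / ‖z‖ ^ 2) • z))^[Module.finrank ℝ E + 1] (a i) ξ‖ ∂μ :=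
        norm_integral_mul_exp_inner_le_integral_norm_fwdDiff_iter (norm_pos_iff.1 hz0)
          (ha.integrable_mul_exp_inner μ hR i z) _
    _ ≤ C * ‖(π / ‖z‖ ^ 2) • z‖ ^ s := hC i _ (hv ▸ div_le_self pi_pos.le hz)
    _ = C * π ^ s * ‖z‖ ^ (-s) := by
        rw [hv, Real.div_rpow pi_pos.le hz0.le, Real.rpow_neg hz0.le]
        ring

lemma exists_norm_integral_mul_exp_inner_le (ha : IsOrderOneSymbol fun i ξ ↦ a i ξ - c)
    (hR : ∀ i, Function.support (a i) ⊆ Metric.closedBall 0 R) {α : ℝ} (hα0 : 0 ≤ α)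
    (hα1 : α < 1) :
    ∃ C, 0 < C ∧ ∀ i (z : E), ‖∫ ξ, a i ξ * exp (I * ofReal ⟪z, ξ⟫) ∂μ‖ ≤
      C * (1 + ‖z‖) ^ (-(Module.finrank ℝ E : ℝ) - α) := by
  obtain ⟨A, hA0, hA⟩ := ha.exists_norm_integral_mul_exp_inner_le_const μ hR
  obtain ⟨B, hB0, hB⟩ := ha.exists_norm_integral_mul_exp_inner_le_rpow μ hR hα0 hα1
  refine ⟨(A + B + 1) * 2 ^ (Module.finrank ℝ E + α), by positivity, fun i z ↦ ?_⟩
  rw [← neg_add']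
  refine le_mul_one_add_rpow_neg (by positivity) (by positivity) (norm_nonneg z)
    ((hA i z).trans (by linarith)) fun hz ↦ (hB i z hz).trans ?_
  gcongr
  linarith

end IsOrderOneSymbol

theorem statement2_general [FiniteDimensional ℝ E] [MeasurableSpace E] [BorelSpace E]
    (μ : Measure E) [μ.IsAddHaarMeasure] {η : E → ℂ}
    (hη : ContDiff ℝ ∞ η) (hηc : HasCompactSupport η) {ψ : ι → E → ℝ} (hψ : IsOrderOneSymbol ψ)
    {α : ℝ} (hα0 : 0 ≤ α) (hα1 : α < 1) :
    ∃ c : ℝ, 0 < c ∧ ∀ i z,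
      ‖∫ ξ, η ξ * exp (I * ofReal (ψ i ξ + ⟪z, ξ⟫)) ∂μ‖ ≤
        c * (1 + ‖z‖) ^ (-(Module.finrank ℝ E : ℝ) - α) := by
  obtain ⟨R, hR⟩ := hηc.isCompact.isBounded.subset_closedBall (0 : E)
  have hsupport (i : ι) : Function.support (fun ξ ↦ η ξ * exp (I * ofReal (ψ i ξ))) ⊆
      Metric.closedBall 0 R :=
    (Function.support_mul_subset_left _ _).trans ((subset_tsupport η).trans hR)
  obtain ⟨c, hc0, hc⟩ :=
    (hψ.mul_exp_sub_apply_zero hη).exists_norm_integral_mul_exp_inner_le μ hsupport hα0 hα1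
  refine ⟨c, hc0, fun i z ↦ (congrArg norm (integral_congr_ae ?_)).trans_le (hc i z)⟩
  refine .of_forall fun ξ ↦ ?_
  simp only [ofReal_add, mul_add, Complex.exp_add, mul_assoc]

end OscillatoryIntegral

/-- low frequency kernel estimate, Lemma 4.1. -/
theorem statement2 {n : ℕ} (η : En n → ℂ) (hη : ContDiff ℝ (⊤ : ℕ∞) η)
    (hηc : HasCompactSupport η)
    (ψ : En n → En n → ℝ) (hψ : PhiClass 1 ψ)
    (α : ℝ) (hα0 : 0 < α) (hα1 : α < 1) :
    ∃ c : ℝ, 0 < c ∧ ∀ x z : En n,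
      ‖∫ ξ : En n, η ξ * Complex.exp (Complex.I * Complex.ofReal (ψ x ξ + ⟪z, ξ⟫))‖ ≤
        c * (1 + ‖z‖) ^ (-(n : ℝ) - α) := by
  simpa only [finrank_euclideanSpace_fin] using
    statement2_general volume hη hηc hψ.isOrderOneSymbol hα0.le hα1
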